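/- There is a fixed finitely generated submonoid of the one-relator group G = Gp⟨a, t | a(tat⁻¹) = (tat⁻¹)a⟩ whose membership problem within G is undecidable: there exists a submonoid S of G such that S.FG holds and the predicate on words l : List (Fin 2 × Bool) given by π(l) ∈ S is not ComputablePred. -/

import Mathlib

/-- The relator `a t a t⁻¹ a⁻¹ t a⁻¹ t⁻¹` (i.e. `a(tat⁻¹)=(tat⁻¹)a`), with `a = of 0`, `t = of 1`. -/
def oneRel : FreeGroup (Fin 2) :=
  FreeGroup.of 0 * FreeGroup.of 1 * FreeGroup.of 0 * (FreeGroup.of 1)⁻¹ *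
    (FreeGroup.of 0)⁻¹ * FreeGroup.of 1 * (FreeGroup.of 0)⁻¹ * (FreeGroup.of 1)⁻¹

/-- The one-relator group `G = Gp⟨a,t | a(tat⁻¹)=(tat⁻¹)a⟩`. -/
abbrev G : Type := PresentedGroup {oneRel}

/-- Evaluation of words: the letter `(i, true)` goes to the image of `FreeGroup.of i` in `G`
and `(i, false)` to its inverse. -/
def π (l : List (Fin 2 × Bool)) : G := PresentedGroup.mk {oneRel} (FreeGroup.mk l)

/-!
The normal closure of `a` in `G` is the right-angled Artin group of a bi-infinite path, with
generators `x j = t ^ j * a * t ^ (-j)`. In it the membership problem for finitely generated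
submonoids is undecidable, for the following reasons.

A finite automaton over `x 0`, …, `x 3` and their inverses is turned into a finitely generated
submonoid by using the `x j` with `j > 4` as states: the transition from `s` to `s'` reading `g`
becomes `x s * g * (x s')⁻¹`. The words read by the automaton are then represented by elements
`p * z * q` of the submonoid, with `p` and `q` fixed. The converse holds up to a homomorphism `φ`
that kills `x 4`: let the `x j` with `j ≤ 4` act on `H × ℤ` by left translation of the target `H`
of `φ`, and those with `j > 4` by shears in the direction of `ℤ`, chosen so that the transitions
never increase the second coordinate. This coordinate then detects that a product of transitions
is not the trace of a run.

Take `H` to be a product of two free groups, the first on the images of `x 0` and `x 2`, the second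
on those of `x 1` and `x 3`. A pair of numbers `(m, n)` is encoded by
`x 0 * x 1 ^ m * x 2 ^ n * x 3`, with `m` visible in one factor and `n` in the other, so that
comparing the two coordinates of a product of such blocks checks that each pair begins where the
preceding one ends. As `x 1` and `x 2` commute, the pairs `(p * m + r, q * m + s)` for `m : ℕ`
form a rational set of blocks, and thus rational sets can express any program built from affine
maps of one variable. Such programs simulate counters, stored as exponents of the primes, and
therefore search for solutions of primitive recursive predicates.
-/

open scoped Pointwise Computability commutatorElement

section RegularLanguages

variable {α : Type*}

theorem isRegular_of_finite {L : Language α} (hL : Set.Finite L) : L.IsRegular := by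
  refine .of_finite_range_leftQuotient <|
    (hL.biUnion fun w _ => w.tails.finite_toSet).finite_subsets.subset ?_
  rintro _ ⟨u, rfl⟩ v huv
  exact Set.mem_biUnion huv ((List.mem_tails v _).2 (List.suffix_append u v))

theorem mem_leftQuotient_mul {L M : Language α} {w y : List α} :
    y ∈ (L * M).leftQuotient w ↔
      y ∈ L.leftQuotient w * M ∨ ∃ u ∈ L, ∃ v, w = u ++ v ∧ y ∈ M.leftQuotient v := by
  simp only [Language.mem_leftQuotient, Language.mem_mul]
  constructor
  · rintro ⟨a, ha, b, hb, hab⟩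
    obtain ⟨v, rfl, rfl⟩ | ⟨u, rfl, rfl⟩ := List.append_eq_append_iff.1 hab
    · exact .inr ⟨a, ha, v, rfl, hb⟩
    · exact .inl ⟨u, ha, b, hb, rfl⟩
  · rintro (⟨u, hu, b, hb, rfl⟩ | ⟨u, hu, v, rfl, hv⟩)
    · exact ⟨w ++ u, hu, b, hb, List.append_assoc ..⟩
    · exact ⟨u, hu, v ++ y, hv, (List.append_assoc ..).symm⟩

theorem isRegular_mul {L M : Language α} (hL : L.IsRegular) (hM : M.IsRegular) :
    (L * M).IsRegular := by
  refine .of_finite_range_leftQuotient <|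
    (hL.finite_range_leftQuotient.image2 (fun K 𝒬 => K * M + sSup 𝒬)
      hM.finite_range_leftQuotient.finite_subsets).subset ?_
  rintro _ ⟨w, rfl⟩
  refine ⟨_, ⟨w, rfl⟩, {K | ∃ u ∈ L, ∃ v, w = u ++ v ∧ M.leftQuotient v = K}, ?_, ?_⟩
  · rintro _ ⟨u, -, v, -, rfl⟩
    exact ⟨v, rfl⟩
  · ext y
    rw [mem_leftQuotient_mul, Language.mem_add]
    refine or_congr_right ⟨?_, ?_⟩
    · rintro ⟨_, ⟨u, hu, v, rfl, rfl⟩, hy⟩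
      exact ⟨u, hu, v, rfl, hy⟩
    · rintro ⟨u, hu, v, rfl, hy⟩
      exact ⟨_, ⟨u, hu, v, rfl, rfl⟩, hy⟩

theorem append_mem_kstar {L : Language α} {u v : List α} (hu : u ∈ L∗) (hv : v ∈ L∗) :
    u ++ v ∈ L∗ := by
  obtain ⟨l, rfl, hl⟩ := Language.mem_kstar.1 hu
  obtain ⟨m, rfl, hm⟩ := Language.mem_kstar.1 hv
  rw [← List.flatten_append]
  exact Language.join_mem_kstar fun y hy => (List.mem_append.1 hy).elim (hl y) (hm y)

theorem mem_kstar_of_mem {L : Language α} {u : List α} (hu : u ∈ L) : u ∈ L∗ :=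
  Language.mem_kstar.2 ⟨[u], by simp, by simpa⟩

theorem mem_leftQuotient_kstar {L : Language α} {w y : List α} :
    y ∈ L∗.leftQuotient w ↔
      (w ∈ L∗ ∧ y ∈ L∗) ∨ ∃ u ∈ L∗, ∃ v, w = u ++ v ∧ y ∈ L.leftQuotient v * L∗ := by
  constructor
  · intro h
    obtain ⟨l, hwy, hl⟩ := Language.mem_kstar.1 h
    clear h
    induction l generalizing w with
    | nil =>
      obtain ⟨rfl, rfl⟩ := List.append_eq_nil_iff.1 hwy
      exact .inl ⟨Language.nil_mem_kstar L, Language.nil_mem_kstar L⟩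
    | cons x l ih =>
      obtain ⟨hx, htail⟩ := List.forall_mem_cons.1 hl
      have hxl : x ++ l.flatten = w ++ y := hwy.symm
      obtain ⟨w', rfl, hw'⟩ | ⟨z, rfl, rfl⟩ := List.append_eq_append_iff.1 hxl
      · obtain ⟨hw, hy⟩ | ⟨u, hu, v, rfl, hy⟩ := ih hw'.symm htail
        · exact .inl ⟨append_mem_kstar (mem_kstar_of_mem hx) hw, hy⟩
        · exact .inr ⟨x ++ u, append_mem_kstar (mem_kstar_of_mem hx) hu, v,
            (List.append_assoc ..).symm, hy⟩
      · exact .inr ⟨[], Language.nil_mem_kstar L, w, rfl,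
          Language.append_mem_mul hx (Language.join_mem_kstar htail)⟩
  · rintro (⟨hw, hy⟩ | ⟨u, hu, v, rfl, a, ha, b, hb, rfl⟩)
    · exact append_mem_kstar hw hy
    · have : u ++ ((v ++ a) ++ b) ∈ L∗ :=
        append_mem_kstar hu (append_mem_kstar (mem_kstar_of_mem ha) hb)
      simpa only [Language.mem_leftQuotient, List.append_assoc] using this

theorem isRegular_kstar {L : Language α} (hL : L.IsRegular) : L∗.IsRegular := by
  refine .of_finite_range_leftQuotient <|
    (((Set.finite_singleton L∗).powerset.image2 (fun 𝒬 𝒦 => sSup 𝒬 + sSup 𝒦 * L∗)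
      hL.finite_range_leftQuotient.finite_subsets)).subset ?_
  rintro _ ⟨w, rfl⟩
  refine ⟨{K | w ∈ L∗ ∧ K = L∗}, fun K hK => hK.2,
    {K | ∃ u ∈ L∗, ∃ v, w = u ++ v ∧ L.leftQuotient v = K}, ?_, ?_⟩
  · rintro _ ⟨u, -, v, -, rfl⟩
    exact ⟨v, rfl⟩
  · ext y
    rw [mem_leftQuotient_kstar, Language.mem_add]
    refine or_congr ⟨?_, ?_⟩ ⟨?_, ?_⟩
    · rintro ⟨_, ⟨hw, rfl⟩, hy⟩
      exact ⟨hw, hy⟩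
    · rintro ⟨hw, hy⟩
      exact ⟨_, ⟨hw, rfl⟩, hy⟩
    · rintro ⟨a, ⟨_, ⟨u, hu, v, rfl, rfl⟩, ha⟩, b, hb, rfl⟩
      exact ⟨u, hu, v, rfl, a, ha, b, hb, rfl⟩
    · rintro ⟨u, hu, v, rfl, a, ha, b, hb, rfl⟩
      exact ⟨a, ⟨_, ⟨u, hu, v, rfl, rfl⟩, ha⟩, b, hb, rfl⟩

end RegularLanguages

section RationalSubsets

variable {α M N : Type*} [Monoid M] [Monoid N] (g : α → M)

/-- The product in a monoid of the elements `g c`, for `c` running along a word. -/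
def wordProd (w : List α) : M := (w.map g).prod

@[simp] theorem wordProd_nil : wordProd g [] = 1 := rfl

@[simp] theorem wordProd_singleton (c : α) : wordProd g [c] = g c := List.prod_singleton

@[simp] theorem wordProd_cons (c : α) (w : List α) :
    wordProd g (c :: w) = g c * wordProd g w := List.prod_cons

theorem wordProd_append (u v : List α) : wordProd g (u ++ v) = wordProd g u * wordProd g v := by
  simp only [wordProd, List.map_append, List.prod_append]

theorem wordProd_flatten (l : List (List α)) :
    wordProd g l.flatten = (l.map (wordProd g)).prod := by
  induction l with
  | nil => rfl
  | cons w l ih => rw [List.flatten_cons, wordProd_append, ih, List.map_cons, List.prod_cons]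

theorem map_wordProd (f : M →* N) (w : List α) : f (wordProd g w) = wordProd (f ∘ g) w := by
  rw [wordProd, wordProd, map_list_prod, List.map_map]

theorem wordProd_image_mul (L K : Language α) :
    wordProd g '' (L * K : Language α) = wordProd g '' L * wordProd g '' K := by
  ext z
  constructor
  · rintro ⟨_, ⟨u, hu, v, hv, rfl⟩, rfl⟩
    exact ⟨_, ⟨u, hu, rfl⟩, _, ⟨v, hv, rfl⟩, (wordProd_append g u v).symm⟩
  · rintro ⟨_, ⟨u, hu, rfl⟩, _, ⟨v, hv, rfl⟩, rfl⟩
    exact ⟨u ++ v, Language.append_mem_mul hu hv, wordProd_append g u v⟩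

theorem wordProd_image_kstar (L : Language α) :
    wordProd g '' (L∗ : Language α) = Submonoid.closure (wordProd g '' L) := by
  ext z
  constructor
  · rintro ⟨w, hw, rfl⟩
    obtain ⟨l, rfl, hl⟩ := Language.mem_kstar.1 hw
    rw [wordProd_flatten]
    refine Submonoid.list_prod_mem _ (List.forall_mem_map.2 fun v hv => ?_)
    exact Submonoid.subset_closure ⟨v, hl v hv, rfl⟩
  · intro hz
    induction hz using Submonoid.closure_induction with
    | mem z hz =>
      obtain ⟨w, hw, rfl⟩ := hz
      exact ⟨w, mem_kstar_of_mem hw, rfl⟩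
    | one => exact ⟨[], Language.nil_mem_kstar L, rfl⟩
    | mul y z _ _ hy hz =>
      obtain ⟨u, hu, rfl⟩ := hy
      obtain ⟨v, hv, rfl⟩ := hz
      exact ⟨u ++ v, append_mem_kstar hu hv, wordProd_append g u v⟩

/-- The rational subsets of a monoid with respect to a family of elements `g`: the sets of values
of the words of a regular language over the index type of `g`. -/
def IsRational (X : Set M) : Prop := ∃ L : Language α, L.IsRegular ∧ wordProd g '' L = X

namespace IsRational

variable {g} {X Y : Set M}

theorem empty : IsRational g (∅ : Set M) :=
  ⟨0, isRegular_of_finite Set.finite_empty, Set.image_empty _⟩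

theorem singleton {z : M} (hz : z ∈ Submonoid.closure (Set.range g)) : IsRational g {z} := by
  suffices ∃ w, wordProd g w = z by
    obtain ⟨w, rfl⟩ := this
    exact ⟨{w}, isRegular_of_finite (Set.finite_singleton w), Set.image_singleton⟩
  induction hz using Submonoid.closure_induction with
  | mem z hz =>
    obtain ⟨c, rfl⟩ := hz
    exact ⟨[c], wordProd_singleton g c⟩
  | one => exact ⟨[], wordProd_nil g⟩
  | mul y z _ _ hy hz =>
    obtain ⟨u, rfl⟩ := hy
    obtain ⟨v, rfl⟩ := hz
    exact ⟨u ++ v, wordProd_append g u v⟩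

theorem union (hX : IsRational g X) (hY : IsRational g Y) : IsRational g (X ∪ Y) := by
  obtain ⟨L, hL, rfl⟩ := hX
  obtain ⟨K, hK, rfl⟩ := hY
  exact ⟨L + K, hL.add hK, Set.image_union _ _ _⟩

theorem mul (hX : IsRational g X) (hY : IsRational g Y) : IsRational g (X * Y) := by
  obtain ⟨L, hL, rfl⟩ := hX
  obtain ⟨K, hK, rfl⟩ := hY
  exact ⟨L * K, isRegular_mul hL hK, wordProd_image_mul g L K⟩

theorem closure (hX : IsRational g X) : IsRational g (Submonoid.closure X : Set M) := by
  obtain ⟨L, hL, rfl⟩ := hX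
  exact ⟨L∗, isRegular_kstar hL, wordProd_image_kstar g L⟩

end IsRational

end RationalSubsets

/-- The group with generators `x j`, `j : ℤ`, and relations saying that `x j` commutes with
`x (j + 1)`: the right-angled Artin group of the bi-infinite path. It is the kernel of the
homomorphism `G → ℤ` killing `a`, with `x j` in the role of `t ^ j * a * t ^ (-j)`. -/
abbrev PathGroup : Type :=
  PresentedGroup (Set.range fun j : ℤ => ⁅FreeGroup.of j, FreeGroup.of (j + 1)⁆)

namespace PathGroup

/-- The standard generators of the path group. -/
def x (j : ℤ) : PathGroup := PresentedGroup.of j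

theorem commute_x (j : ℤ) : Commute (x j) (x (j + 1)) := by
  rw [← commutatorElement_eq_one_iff_commute]
  exact PresentedGroup.one_of_mem ⟨j, rfl⟩

theorem closure_range_x : Subgroup.closure (Set.range x) = ⊤ :=
  PresentedGroup.closure_range_of _

section Lift

variable {K : Type*} [Group K] (k : ℤ → K) (hk : ∀ j, Commute (k j) (k (j + 1)))

/-- The universal property of the path group. -/
def lift : PathGroup →* K :=
  PresentedGroup.toGroup (f := k) <| by
    rintro _ ⟨j, rfl⟩
    rw [map_commutatorElement, FreeGroup.lift_apply_of, FreeGroup.lift_apply_of,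
      commutatorElement_eq_one_iff_commute]
    exact hk j

@[simp] theorem lift_x (j : ℤ) : lift k hk (x j) = k j := PresentedGroup.toGroup.of _

end Lift

end PathGroup

namespace G

/-- The image in `G` of the generator `a`. -/
def a : G := PresentedGroup.of 0

/-- The image in `G` of the generator `t`. -/
def t : G := PresentedGroup.of 1

theorem oneRel_eq_commutator : oneRel =
    ⁅FreeGroup.of (0 : Fin 2), FreeGroup.of 1 * FreeGroup.of 0 * (FreeGroup.of 1)⁻¹⁆ := by
  rw [oneRel, commutatorElement_def]
  group

theorem commute_a_conj : Commute a (t * a * t⁻¹) := by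
  have h := PresentedGroup.one_of_mem (rels := {oneRel}) oneRel_eq_commutator.symm
  rw [map_commutatorElement, map_mul, map_mul, map_inv, commutatorElement_eq_one_iff_commute] at h
  exact h

theorem conj_zpow_add_one (j : ℤ) :
    t ^ (j + 1) * a * (t ^ (j + 1))⁻¹ = t ^ j * (t * a * t⁻¹) * (t ^ j)⁻¹ := by
  rw [zpow_add_one]
  group

theorem commute_conj_zpow (j : ℤ) :
    Commute (t ^ j * a * (t ^ j)⁻¹) (t ^ (j + 1) * a * (t ^ (j + 1))⁻¹) := by
  rw [conj_zpow_add_one, Commute.conj_iff]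
  exact commute_a_conj

/-- The embedding of the path group in `G` with image the kernel of `a ↦ 0`, `t ↦ 1`. -/
def ofPathGroup : PathGroup →* G :=
  PathGroup.lift (fun j => t ^ j * a * (t ^ j)⁻¹) commute_conj_zpow

theorem ofPathGroup_x (j : ℤ) : ofPathGroup (PathGroup.x j) = t ^ j * a * (t ^ j)⁻¹ :=
  PathGroup.lift_x _ _ j

/-- The image of `a` under `toWreath`. Conjugation by `t ^ j` shifts the family `i ↦ x (-i)` by
`j`, which makes `x j` its value at the identity. -/
def wreathA : PathGroup ≀ᵣ Multiplicative ℤ := ⟨fun i => PathGroup.x (-i.toAdd), 1⟩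

/-- The image of `t` under `toWreath`: the generator of the acting group. -/
def wreathT : PathGroup ≀ᵣ Multiplicative ℤ := .inl (.ofAdd 1)

theorem commute_wreathA_conj : Commute wreathA (wreathT * wreathA * wreathT⁻¹) := by
  refine RegularWreathProduct.ext (funext fun i => ?_) ?_
  · have h := (PathGroup.commute_x (-i.toAdd)).eq
    simpa [wreathA, wreathT, add_comm, mul_assoc] using h
  · simp [wreathA, wreathT]

/-- The homomorphism of `G` to a wreath product that recovers the path group: `G` is the
semidirect product of the path group with `ℤ`, embedded in the wreath product. -/
def toWreath : G →* PathGroup ≀ᵣ Multiplicative ℤ :=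
  PresentedGroup.toGroup (rels := {oneRel}) (f := ![wreathA, wreathT]) <| by
    rintro _ rfl
    rw [oneRel_eq_commutator, map_commutatorElement, commutatorElement_eq_one_iff_commute]
    simp only [map_mul, map_inv, FreeGroup.lift_apply_of]
    exact commute_wreathA_conj

theorem toWreath_a : toWreath a = wreathA := PresentedGroup.toGroup.of _

theorem toWreath_t : toWreath t = wreathT := PresentedGroup.toGroup.of _

theorem toWreath_ofPathGroup_x (j : ℤ) :
    toWreath (ofPathGroup (PathGroup.x j)) =
      ⟨fun i => PathGroup.x (j - i.toAdd), 1⟩ := by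
  have ht : wreathT ^ j = .inl (.ofAdd j) := by
    rw [wreathT, ← map_zpow, ← ofAdd_zsmul, smul_eq_mul, mul_one]
  rw [ofPathGroup_x, map_mul, map_mul, map_inv, map_zpow, toWreath_a, toWreath_t, ht]
  ext <;> simp [wreathA, sub_eq_add_neg, add_comm]

theorem toWreath_ofPathGroup (z : PathGroup) :
    (toWreath (ofPathGroup z)).right = 1 ∧ (toWreath (ofPathGroup z)).left 1 = z := by
  have hz : z ∈ Subgroup.closure (Set.range PathGroup.x) := by
    rw [PathGroup.closure_range_x]
    trivial
  induction hz using Subgroup.closure_induction with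
  | mem z hz =>
    obtain ⟨j, rfl⟩ := hz
    simp [toWreath_ofPathGroup_x]
  | one => simp
  | mul y z _ _ hy hz => simp [hy, hz]
  | inv z _ hz => simp [hz]

theorem ofPathGroup_injective : Function.Injective ofPathGroup :=
  Function.LeftInverse.injective (g := fun u => (toWreath u).left 1)
    fun z => (toWreath_ofPathGroup z).2

end G

namespace PathGroup

section Shear

variable {H : Type*}

/-- The permutation of `H × ℤ` adding one to the second coordinate over the points of `U`. -/
noncomputable def shear (U : Set H) : Equiv.Perm (H × ℤ) :=
  (Equiv.refl H).prodShear fun h => Equiv.addRight (U.indicator 1 h)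

theorem shear_apply (U : Set H) (y : H × ℤ) : shear U y = (y.1, y.2 + U.indicator 1 y.1) := rfl

theorem shear_inv_apply (U : Set H) (y : H × ℤ) :
    (shear U)⁻¹ y = (y.1, y.2 - U.indicator 1 y.1) := rfl

theorem commute_shear (U V : Set H) : Commute (shear U) (shear V) :=
  Equiv.ext fun _ => Prod.ext rfl (add_right_comm _ _ _)

variable (H) in
/-- The permutations of `H × ℤ` that do not increase the second coordinate. -/
def nonincreasing : Submonoid (Equiv.Perm (H × ℤ)) where
  carrier := {f | ∀ y, (f y).2 ≤ y.2}
  one_mem' _ := le_rfl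
  mul_mem' {_ f'} hf hf' y := (hf (f' y)).trans (hf' y)

variable [Group H]

variable (H) in
/-- The action of a group `H` on `H × ℤ` by left multiplication on the first coordinate. -/
def leftMulHom : H →* Equiv.Perm (H × ℤ) where
  toFun h := (Equiv.mulLeft h).prodCongr (Equiv.refl ℤ)
  map_one' := by ext <;> simp
  map_mul' _ _ := by ext <;> simp [mul_assoc]

@[simp] theorem leftMulHom_apply (h : H) (y : H × ℤ) : leftMulHom H h y = (h * y.1, y.2) := rfl

theorem shear_mul_leftMulHom_mul_mem_nonincreasing {U V : Set H} {h : H} :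
    shear U * leftMulHom H h * (shear V)⁻¹ ∈ nonincreasing H ↔ ∀ k, h * k ∈ U → k ∈ V := by
  have key (k : H) (c : ℤ) :
      ((shear U * leftMulHom H h * (shear V)⁻¹) (k, c)).2 ≤ c ↔ (h * k ∈ U → k ∈ V) := by
    simp only [Equiv.Perm.mul_apply, shear_inv_apply, leftMulHom_apply, shear_apply]
    by_cases hU : h * k ∈ U <;> by_cases hV : k ∈ V <;> simp [hU, hV]
  exact ⟨fun hf k => (key k 0).1 (hf (k, 0)), fun hk y => (key y.1 y.2).2 (hk y.1)⟩

variable (n : ℤ) (φ : PathGroup →* H) (U : ℤ → Set H)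

/-- The image of `x j` under `shearHom`. -/
noncomputable def shearGen (j : ℤ) : Equiv.Perm (H × ℤ) :=
  if j ≤ n then leftMulHom H (φ (x j)) else shear (U j)

theorem commute_shearGen (hφ : φ (x n) = 1) (j : ℤ) :
    Commute (shearGen n φ U j) (shearGen n φ U (j + 1)) := by
  obtain hj | rfl | hj := lt_trichotomy j n
  · rw [shearGen, shearGen, if_pos hj.le, if_pos (Int.add_one_le_iff.2 hj)]
    exact ((commute_x j).map φ).map (leftMulHom H)
  · rw [shearGen, if_pos le_rfl, hφ, map_one]
    exact Commute.one_left _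
  · rw [shearGen, shearGen, if_neg hj.not_ge, if_neg (hj.trans (lt_add_one j)).not_ge]
    exact commute_shear _ _

variable (hφ : φ (x n) = 1)

/-- The action of the path group on `H × ℤ` in which the generators up to `x n` act by left
multiplication through `φ`, and each later `x j` by the shear along `U j`. As `x n` acts trivially,
the two kinds of permutations need not commute. -/
noncomputable def shearHom : PathGroup →* Equiv.Perm (H × ℤ) :=
  lift (shearGen n φ U) (commute_shearGen n φ U hφ)

theorem shearHom_of_mem_closure {z : PathGroup} (hz : z ∈ Subgroup.closure (x '' Set.Iio n)) :
    shearHom n φ U hφ z = leftMulHom H (φ z) := by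
  refine MonoidHom.eqOn_closure (f := shearHom n φ U hφ) (g := (leftMulHom H).comp φ) ?_ hz
  rintro _ ⟨j, hj, rfl⟩
  exact (lift_x _ _ j).trans (if_pos hj.le)

theorem shearHom_mem_nonincreasing {z : PathGroup} (hz : z ∈ Subgroup.closure (x '' Set.Iio n))
    {i j : ℤ} (hi : n < i) (hj : n < j) :
    shearHom n φ U hφ (x i * z * (x j)⁻¹) ∈ nonincreasing H ↔ ∀ k, φ z * k ∈ U i → k ∈ U j := by
  rw [map_mul, map_mul, map_inv, shearHom_of_mem_closure n φ U hφ hz, shearHom, lift_x, lift_x,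
    shearGen, shearGen, if_neg hi.not_ge, if_neg hj.not_ge,
    shear_mul_leftMulHom_mul_mem_nonincreasing]

end Shear

section Automaton

variable {α σ H : Type*} [Group H] (M : DFA α σ) (g : α → PathGroup) (φ : PathGroup →* H)
  (ι : Option σ → ℤ)

/-- The generators of the submonoid simulating the automaton `M`: a transition between two states
is an element of the group, with the generators `x (ι (some s))` in the role of the states, and
`x (ι none)` in the role of a state reached from the accepting states without reading a letter. -/
inductive transitions : Set PathGroup
  | step (s : σ) (c : α) :
      transitions (x (ι (some s)) * g c * (x (ι (some (M.step s c))))⁻¹)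
  | accept (s : σ) (hs : s ∈ M.accept) : transitions (x (ι (some s)) * (x (ι none))⁻¹)

theorem finite_transitions [Finite α] [Finite σ] : (transitions M g ι).Finite := by
  refine (((Set.finite_range fun sc : σ × α => x (ι (some sc.1)) * g sc.2 *
    (x (ι (some (M.step sc.1 sc.2))))⁻¹).union
    (Set.finite_range fun s : σ => x (ι (some s)) * (x (ι none))⁻¹))).subset ?_
  rintro _ (⟨s, c⟩ | ⟨s, -⟩)
  · exact .inl ⟨(s, c), rfl⟩
  · exact .inr ⟨s, rfl⟩

theorem eval_mem_closure_transitions (w : List α) :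
    x (ι (some M.start)) * wordProd g w * (x (ι (some (M.eval w))))⁻¹ ∈
      Submonoid.closure (transitions M g ι) := by
  induction w using List.reverseRecOn with
  | nil => simp
  | append_singleton w c ih =>
    have hc := Submonoid.subset_closure (transitions.step (M := M) (g := g) (ι := ι) (M.eval w) c)
    rw [DFA.eval_append_singleton, wordProd_append, wordProd_singleton]
    convert mul_mem ih hc using 1
    group

theorem mem_closure_transitions_of_mem_accepts {w : List α} (hw : w ∈ M.accepts) :
    x (ι (some M.start)) * wordProd g w * (x (ι none))⁻¹ ∈
      Submonoid.closure (transitions M g ι) := by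
  have hs := Submonoid.subset_closure
    (transitions.accept (M := M) (g := g) (ι := ι) (M.eval w) hw)
  convert mul_mem (eval_mem_closure_transitions M g ι w) hs using 1
  group

/-- The words leading from the initial state to a state, where `none` stands for a state reached
from the accepting states without reading a letter. -/
def wordsTo : Option σ → Language α
  | none => M.accepts
  | some s => {w | M.eval w = s}

/-- The sets used to prevent `transitions` from generating anything but computations: `invariant`
at the state `s` consists of the inverses of the values under `φ` of the words leading to `s`. -/
def invariant (j : ℤ) : Set H :=
  {h | ∃ s, ι s = j ∧ ∃ w ∈ wordsTo M s, φ (wordProd g w) * h = 1}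

variable {ι}

theorem mem_invariant (hι : ι.Injective) {s : Option σ} {h : H} :
    h ∈ invariant M g φ ι (ι s) ↔ ∃ w ∈ wordsTo M s, φ (wordProd g w) * h = 1 :=
  ⟨fun ⟨_, hs, hw⟩ => hι hs ▸ hw, fun hw => ⟨s, rfl, hw⟩⟩

variable {M g φ}

theorem closure_transitions_le (hι : ι.Injective) {n : ℤ} (hn : ∀ s, n < ι s)
    (hφ : φ (x n) = 1) (hg : ∀ c, g c ∈ Subgroup.closure (x '' Set.Iio n)) :
    Submonoid.closure (transitions M g ι) ≤
      (nonincreasing H).comap (shearHom n φ (invariant M g φ ι) hφ) := by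
  rw [Submonoid.closure_le]
  rintro _ (⟨s, c⟩ | ⟨s, hs⟩)
  · refine (shearHom_mem_nonincreasing n φ _ hφ (hg c) (hn _) (hn _)).2 fun k hk => ?_
    obtain ⟨w, rfl, hwk⟩ := (mem_invariant M g φ hι).1 hk
    refine (mem_invariant M g φ hι).2 ⟨w ++ [c], DFA.eval_append_singleton .., ?_⟩
    rw [wordProd_append, wordProd_singleton, map_mul, mul_assoc, hwk]
  · rw [← mul_one (x (ι (some s)))]
    refine (shearHom_mem_nonincreasing n φ _ hφ (one_mem _) (hn _) (hn _)).2 fun k hk => ?_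
    obtain ⟨w, rfl, hwk⟩ := (mem_invariant M g φ hι).1 hk
    exact (mem_invariant M g φ hι).2 ⟨w, hs, by rwa [map_one, one_mul] at hwk⟩

theorem exists_mem_accepts_of_mem_closure_transitions (hι : ι.Injective) {n : ℤ}
    (hn : ∀ s, n < ι s) (hφ : φ (x n) = 1)
    (hg : ∀ c, g c ∈ Subgroup.closure (x '' Set.Iio n)) {z : PathGroup}
    (hz : z ∈ Subgroup.closure (x '' Set.Iio n))
    (h : x (ι (some M.start)) * z * (x (ι none))⁻¹ ∈ Submonoid.closure (transitions M g ι)) :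
    ∃ w ∈ M.accepts, φ (wordProd g w) = φ z := by
  have hk := (shearHom_mem_nonincreasing n φ _ hφ hz (hn _) (hn _)).1
    (closure_transitions_le hι hn hφ hg h) (φ z)⁻¹
  have hstart : φ z * (φ z)⁻¹ ∈ invariant M g φ ι (ι (some M.start)) :=
    (mem_invariant M g φ hι).2 ⟨[], rfl, by simp⟩
  obtain ⟨w, hw, hwz⟩ := (mem_invariant M g φ hι).1 (hk hstart)
  exact ⟨w, hw, mul_inv_eq_one.1 hwz⟩

theorem exists_fg_submonoid_of_isRational [Finite α] {n : ℤ} (hφ : φ (x n) = 1)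
    (hg : ∀ c, g c ∈ Subgroup.closure (x '' Set.Iio n)) {X : Set PathGroup}
    (hX : IsRational g X) :
    ∃ S : Submonoid PathGroup, S.FG ∧ ∃ p q : PathGroup, (∀ z ∈ X, p * z * q ∈ S) ∧
      ∀ z ∈ Subgroup.closure (x '' Set.Iio n), p * z * q ∈ S → φ z ∈ φ '' X := by
  obtain ⟨_, ⟨σ, _, M, rfl⟩, rfl⟩ := hX
  obtain ⟨e⟩ := nonempty_embedding_nat (Option σ)
  let ι (s : Option σ) : ℤ := n + 1 + e s
  have hι : ι.Injective := fun s s' h => e.injective (by simpa [ι] using h)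
  have hn (s : Option σ) : n < ι s := by grind
  refine ⟨.closure (transitions M g ι), (Submonoid.fg_iff _).2 ⟨_, rfl, finite_transitions M g ι⟩,
    x (ι (some M.start)), (x (ι none))⁻¹, ?_, fun z hz h => ?_⟩
  · rintro _ ⟨w, hw, rfl⟩
    exact mem_closure_transitions_of_mem_accepts M g ι hw
  · obtain ⟨w, hw, hwz⟩ := exists_mem_accepts_of_mem_closure_transitions hι hn hφ hg hz h
    exact ⟨_, ⟨w, hw, rfl⟩, hwz⟩

end Automaton

end PathGroup

section AffinePrograms

/-- The partial map `p * m + r ↦ q * m + s`, for natural numbers `m`, as a relation. -/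
def affine (p r q s : ℕ) : ℕ → ℕ → Prop := fun a b => ∃ m, a = p * m + r ∧ b = q * m + s

/-- The relations on natural numbers computed by nondeterministic programs with a single variable
whose instructions are partial affine maps, which branch with `⊔`, run in sequence with
`Relation.Comp` and repeat with `Relation.ReflTransGen`. -/
inductive IsAffineProgram : (ℕ → ℕ → Prop) → Prop
  | affine (p r q s : ℕ) : IsAffineProgram (affine p r q s)
  | bot : IsAffineProgram ⊥
  | sup {R R' : ℕ → ℕ → Prop} :
      IsAffineProgram R → IsAffineProgram R' → IsAffineProgram (R ⊔ R')
  | comp {R R' : ℕ → ℕ → Prop} :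
      IsAffineProgram R → IsAffineProgram R' → IsAffineProgram (Relation.Comp R R')
  | reflTransGen {R : ℕ → ℕ → Prop} :
      IsAffineProgram R → IsAffineProgram (Relation.ReflTransGen R)

end AffinePrograms

section PositiveWords

variable {α β : Type*}

theorem eq_and_eq_of_replicate_append_cons_eq {c d : α} (hcd : c ≠ d) {m n : ℕ} {u v : List α}
    (h : List.replicate m c ++ d :: u = List.replicate n c ++ d :: v) : m = n ∧ u = v := by
  induction m generalizing n with
  | zero => cases n <;> simp_all [List.replicate_succ]
  | succ m ih => cases n <;> simp_all [List.replicate_succ]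

theorem wordProd_of_replicate (c : α) (n : ℕ) :
    wordProd FreeGroup.of (List.replicate n c) = FreeGroup.of c ^ n := by
  rw [wordProd, List.map_replicate, List.prod_replicate]

theorem map_wordProd_of (f : α → β) (w : List α) :
    FreeGroup.map f (wordProd FreeGroup.of w) = wordProd FreeGroup.of (w.map f) := by
  rw [map_wordProd, wordProd, wordProd, List.map_map]
  rfl

theorem wordProd_of_injective :
    Function.Injective (wordProd (FreeGroup.of : α → FreeGroup α)) := by
  classical
  have toWord_wordProd (w : List α) : (wordProd FreeGroup.of w).toWord = w.map (·, true) := by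
    have hmk : wordProd FreeGroup.of w = FreeGroup.mk (w.map (·, true)) := by
      induction w with
      | nil => rfl
      | cons c w ih => rw [wordProd_cons, ih, List.map_cons]; rfl
    have hred : FreeGroup.IsReduced (w.map (·, true)) := by
      rw [FreeGroup.IsReduced, List.isChain_map]
      exact (List.pairwise_of_forall fun _ _ _ => rfl).isChain
    rw [hmk, FreeGroup.toWord_mk, hred.reduce_eq]
  intro u v huv
  have := congrArg FreeGroup.toWord huv
  rw [toWord_wordProd, toWord_wordProd] at this
  exact List.map_injective_iff.2 (Prod.mk_left_injective true) this

end PositiveWords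

namespace PathGroup

/-- The element of the path group encoding the pair `p` of natural numbers. -/
def block (p : ℕ × ℕ) : PathGroup := x 0 * (x 1 ^ p.1 * x 2 ^ p.2) * x 3

/-- `chain l a b` says that the list of pairs `l` is the list of successive steps of a path from
`a` to `b`. -/
def chain : List (ℕ × ℕ) → ℕ → ℕ → Prop
  | [], a, b => a = b
  | p :: l, a, b => a = p.1 ∧ chain l p.2 b

theorem chain_append {l l' : List (ℕ × ℕ)} {a c : ℕ} :
    chain (l ++ l') a c ↔ ∃ b, chain l a b ∧ chain l' b c := by
  induction l generalizing a with
  | nil => simp [chain]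
  | cons p l ih => simp [chain, ih, and_assoc]

section Ends

/-- The elements undoing the blocks of a path that ends in `0`. -/
def cancellers : Set PathGroup := {(x 0 * x 3)⁻¹, (x 1 * x 2)⁻¹}

theorem block_mul_cancellers (p : ℕ × ℕ) :
    block p * (x 1 ^ p.2 * ((x 1 * x 2)⁻¹ ^ p.2 * (x 0 * x 3)⁻¹)) = x 1 ^ p.1 := by
  obtain ⟨m, n⟩ := p
  have h₀₁ : Commute (x 0) (x 1 ^ m) := (commute_x 0).pow_right m
  have h₁₂ : Commute (x 1) (x 2) := commute_x 1
  have h₂₃ : Commute (x 2 ^ n) (x 3) := (commute_x 2).pow_left n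
  have hcancel : x 1 ^ n * (x 1 * x 2)⁻¹ ^ n = (x 2 ^ n)⁻¹ := by
    rw [inv_pow, h₁₂.mul_pow, (h₁₂.pow_pow n n).eq, mul_inv_rev, mul_inv_cancel_left]
  calc
    _ = x 0 * x 1 ^ m * (x 2 ^ n * x 3 * (x 1 ^ n * (x 1 * x 2)⁻¹ ^ n)) * (x 0 * x 3)⁻¹ := by
      simp only [block, mul_assoc]
    _ = x 0 * x 1 ^ m * x 3 * (x 0 * x 3)⁻¹ := by
      rw [hcancel, h₂₃.eq, mul_inv_cancel_right]
    _ = x 0 * x 1 ^ m * (x 0)⁻¹ := by group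
    _ = x 1 ^ m := by rw [h₀₁.eq, mul_inv_cancel_right]

theorem exists_wordProd_block_mul_eq {l : List (ℕ × ℕ)} {n : ℕ} (h : chain l n 0) :
    ∃ e ∈ Submonoid.closure cancellers, wordProd block l * e = x 1 ^ n := by
  induction l generalizing n with
  | nil => exact ⟨1, one_mem _, by simp [show n = 0 from h]⟩
  | cons p l ih =>
    obtain ⟨rfl, hl⟩ := h
    obtain ⟨e, he, hle⟩ := ih hl
    refine ⟨e * ((x 1 * x 2)⁻¹ ^ p.2 * (x 0 * x 3)⁻¹), mul_mem he (mul_mem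
      (pow_mem (Submonoid.subset_closure (.inr rfl)) _) (Submonoid.subset_closure (.inl rfl))), ?_⟩
    rw [wordProd_cons, mul_assoc, ← mul_assoc _ e, hle, block_mul_cancellers]

/-- The images of the generators in the free group on two generators that is the factor of
`toProd` of the parity of the index. -/
def factorGen (j : ℤ) : FreeGroup Bool :=
  if j = 0 ∨ j = 1 then .of true else if j = 2 ∨ j = 3 then .of false else 1

/-- The homomorphism to a product of free groups sending `x 0`, `x 2` to the generators of the
first, `x 1`, `x 3` to those of the second factor, and the other `x j` to `1`. -/
def toProd : PathGroup →* FreeGroup Bool × FreeGroup Bool :=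
  lift (fun j => if Even j then (factorGen j, 1) else (1, factorGen j)) fun j => by
    by_cases h : Even j
    · rw [if_pos h, if_neg (by rwa [Int.even_add_one, not_not])]
      exact MonoidHom.commute_inl_inr _ _
    · rw [if_neg h, if_pos (Int.even_add_one.2 h)]
      exact (MonoidHom.commute_inl_inr _ _).symm

@[simp] theorem toProd_x (j : ℤ) :
    toProd (x j) = if Even j then (factorGen j, 1) else (1, factorGen j) := lift_x _ _ j

/-- The first coordinate of the image of a list of blocks in the product of free groups. -/
def outWord (l : List (ℕ × ℕ)) : List Bool := l.flatMap fun p => true :: List.replicate p.2 false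

/-- The second coordinate of the image of a list of blocks in the product of free groups. -/
def inWord (l : List (ℕ × ℕ)) : List Bool := l.flatMap fun p => List.replicate p.1 true ++ [false]

theorem toProd_wordProd_block (l : List (ℕ × ℕ)) : toProd (wordProd block l) =
    (wordProd FreeGroup.of (outWord l), wordProd FreeGroup.of (inWord l)) := by
  induction l with
  | nil => rfl
  | cons p l ih =>
    rw [wordProd_cons, map_mul, ih]
    simp [block, outWord, inWord, factorGen, wordProd_append, wordProd_of_replicate, mul_assoc,
      Int.even_iff]

theorem toProd_snd_of_mem_closure_cancellers {e : PathGroup}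
    (he : e ∈ Submonoid.closure cancellers) :
    (toProd e).2 = FreeGroup.map not (toProd e).1 := by
  refine MonoidHom.eqOn_closureM (f := (MonoidHom.snd _ _).comp toProd)
    (g := (FreeGroup.map not).comp ((MonoidHom.fst _ _).comp toProd)) ?_ he
  rintro _ (rfl | rfl) <;> simp [factorGen, Int.even_iff]

theorem chain_of_inWord_eq {l : List (ℕ × ℕ)} {n : ℕ}
    (h : inWord l = List.replicate n true ++ (outWord l).map not) : chain l n 0 := by
  induction l generalizing n with
  | nil =>
    rw [inWord, outWord, List.flatMap_nil, List.flatMap_nil, List.map_nil, List.append_nil] at h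
    exact (List.replicate_eq_nil_iff true).1 h.symm
  | cons p l ih =>
    have h' : List.replicate p.1 true ++ false :: inWord l = List.replicate n true ++
        false :: (List.replicate p.2 true ++ (outWord l).map not) := by
      simpa [inWord, outWord] using h
    obtain ⟨hp, hl⟩ := eq_and_eq_of_replicate_append_cons_eq (by decide) h'
    exact ⟨hp.symm, ih hl⟩

theorem chain_of_toProd_eq {l : List (ℕ × ℕ)} {e : PathGroup} {n : ℕ}
    (he : e ∈ Submonoid.closure cancellers)
    (h : toProd (wordProd block l * e) = toProd (x 1 ^ n)) : chain l n 0 := by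
  have hx : toProd (x 1 ^ n) = (1, wordProd FreeGroup.of (List.replicate n true)) := by
    simp [factorGen, wordProd_of_replicate]
  rw [map_mul, toProd_wordProd_block, hx, Prod.ext_iff] at h
  obtain ⟨hout, hin⟩ : wordProd FreeGroup.of (outWord l) * (toProd e).1 = 1 ∧
      wordProd FreeGroup.of (inWord l) * (toProd e).2 =
        wordProd FreeGroup.of (List.replicate n true) := h
  refine chain_of_inWord_eq (wordProd_of_injective ?_)
  rw [wordProd_append, ← hin, ← map_wordProd_of,
    toProd_snd_of_mem_closure_cancellers he, eq_inv_of_mul_eq_one_right hout, map_inv,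
    inv_mul_cancel_right]

end Ends

/-- The generators `x 0`, …, `x 3` and their inverses. -/
def letters (c : Set.Ico (0 : ℤ) 4 × Bool) : PathGroup := bif c.2 then x c.1 else (x c.1)⁻¹

theorem x_mem_closure_letters {j : ℤ} (hj : j ∈ Set.Ico 0 4) :
    x j ∈ Submonoid.closure (Set.range letters) :=
  Submonoid.subset_closure ⟨(⟨j, hj⟩, true), rfl⟩

theorem x_inv_mem_closure_letters {j : ℤ} (hj : j ∈ Set.Ico 0 4) :
    (x j)⁻¹ ∈ Submonoid.closure (Set.range letters) :=
  Submonoid.subset_closure ⟨(⟨j, hj⟩, false), rfl⟩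

theorem letters_mem_closure (c : Set.Ico (0 : ℤ) 4 × Bool) :
    letters c ∈ Subgroup.closure (x '' Set.Iio 4) := by
  have hc : x c.1 ∈ Subgroup.closure (x '' Set.Iio 4) :=
    Subgroup.subset_closure ⟨c.1, c.1.2.2, rfl⟩
  obtain ⟨j, _ | _⟩ := c
  · exact inv_mem hc
  · exact hc

theorem isRational_closure_cancellers :
    IsRational letters (Submonoid.closure cancellers : Set PathGroup) := by
  rw [cancellers, Set.insert_eq]
  simp only [mul_inv_rev]
  refine .closure (.union (.singleton (mul_mem ?_ ?_)) (.singleton (mul_mem ?_ ?_))) <;>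
    exact x_inv_mem_closure_letters (by simp)

/-- A relation on the natural numbers is realizable if its pairs are those connected by the paths
of a set whose images as products of blocks form a rational subset of the path group. -/
def Realizable (R : ℕ → ℕ → Prop) : Prop :=
  ∃ B : Language (ℕ × ℕ), IsRational letters (wordProd block '' B) ∧
    ∀ a b, R a b ↔ ∃ l ∈ B, chain l a b

namespace Realizable

variable {R R' : ℕ → ℕ → Prop}

theorem bot : Realizable ⊥ := by
  refine ⟨0, ?_, fun a b => ⟨False.elim, fun ⟨_, hl, _⟩ => hl⟩⟩
  exact (Set.image_empty (wordProd block)).symm ▸ IsRational.empty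

theorem sup (hR : Realizable R) (hR' : Realizable R') : Realizable (R ⊔ R') := by
  obtain ⟨B, hB, hRB⟩ := hR
  obtain ⟨B', hB', hRB'⟩ := hR'
  refine ⟨B + B', ?_, fun a b => ?_⟩
  · exact (Set.image_union (wordProd block) B B').symm ▸ hB.union hB'
  · simp only [Pi.sup_apply, sup_Prop_eq, hRB, hRB', Language.mem_add, or_and_right, exists_or]

theorem comp (hR : Realizable R) (hR' : Realizable R') : Realizable (Relation.Comp R R') := by
  obtain ⟨B, hB, hRB⟩ := hR
  obtain ⟨B', hB', hRB'⟩ := hR'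
  refine ⟨B * B', ?_, fun a c => ⟨?_, ?_⟩⟩
  · rw [wordProd_image_mul]
    exact hB.mul hB'
  · rintro ⟨b, hab, hbc⟩
    obtain ⟨l, hl, hlab⟩ := (hRB a b).1 hab
    obtain ⟨l', hl', hlbc⟩ := (hRB' b c).1 hbc
    exact ⟨_, Language.append_mem_mul hl hl', chain_append.2 ⟨b, hlab, hlbc⟩⟩
  · rintro ⟨_, ⟨l, hl, l', hl', rfl⟩, h⟩
    obtain ⟨b, hlab, hlbc⟩ := chain_append.1 h
    exact ⟨b, (hRB a b).2 ⟨l, hl, hlab⟩, (hRB' b c).2 ⟨l', hl', hlbc⟩⟩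

theorem reflTransGen (hR : Realizable R) : Realizable (Relation.ReflTransGen R) := by
  obtain ⟨B, hB, hRB⟩ := hR
  refine ⟨B∗, ?_, fun a b => ⟨fun h => ?_, ?_⟩⟩
  · rw [wordProd_image_kstar]
    exact hB.closure
  · induction h with
    | refl => exact ⟨[], Language.nil_mem_kstar B, rfl⟩
    | @tail b c _ hbc ih =>
      obtain ⟨l, hl, hlab⟩ := ih
      obtain ⟨l', hl', hlbc⟩ := (hRB b c).1 hbc
      exact ⟨l ++ l', append_mem_kstar hl (mem_kstar_of_mem hl'), chain_append.2 ⟨b, hlab, hlbc⟩⟩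
  · rintro ⟨l, hl, h⟩
    obtain ⟨L, rfl, hL⟩ := Language.mem_kstar.1 hl
    clear hl
    induction L generalizing a with
    | nil => exact (show a = b from h) ▸ .refl
    | cons l L ih =>
      obtain ⟨hlB, hLB⟩ := List.forall_mem_cons.1 hL
      obtain ⟨c, hac, hcb⟩ := chain_append.1 h
      exact .head ((hRB a c).2 ⟨l, hlB, hac⟩) (ih c hLB hcb)

end Realizable

theorem block_affine (p r q s m : ℕ) : block (p * m + r, q * m + s) =
    x 0 * (x 1 ^ p * x 2 ^ q) ^ m * (x 1 ^ r * x 2 ^ s * x 3) := by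
  have h₁₂ (i j : ℕ) : Commute (x 1 ^ i) (x 2 ^ j) := (commute_x 1).pow_pow i j
  have hswap : x 1 ^ r * x 2 ^ (q * m) = x 2 ^ (q * m) * x 1 ^ r := (h₁₂ r (q * m)).eq
  calc
    _ = x 0 * x 1 ^ (p * m) * (x 1 ^ r * x 2 ^ (q * m)) * x 2 ^ s * x 3 := by
      simp only [block, pow_add, mul_assoc]
    _ = x 0 * (x 1 ^ (p * m) * x 2 ^ (q * m)) * (x 1 ^ r * x 2 ^ s * x 3) := by
      rw [hswap]
      simp only [mul_assoc]
    _ = _ := by rw [(h₁₂ p q).mul_pow, ← pow_mul, ← pow_mul]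

theorem realizable_affine (p r q s : ℕ) : Realizable (affine p r q s) := by
  refine ⟨{l | ∃ m, l = [(p * m + r, q * m + s)]}, ?_, fun a b => ⟨?_, ?_⟩⟩
  · have hset : wordProd block '' {l | ∃ m, l = [(p * m + r, q * m + s)]} =
        {x 0} * (Submonoid.closure {x 1 ^ p * x 2 ^ q} : Set PathGroup) *
          {x 1 ^ r * x 2 ^ s * x 3} := by
      ext z
      rw [← Submonoid.powers_eq_closure]
      constructor
      · rintro ⟨_, ⟨m, rfl⟩, rfl⟩
        rw [wordProd_singleton, block_affine]
        exact Set.mul_mem_mul (Set.mul_mem_mul rfl ⟨m, rfl⟩) rfl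
      · rintro ⟨_, ⟨_, rfl, _, ⟨m, rfl⟩, rfl⟩, _, rfl, rfl⟩
        exact ⟨_, ⟨m, rfl⟩, by rw [wordProd_singleton, block_affine]⟩
    have hx {j : ℤ} (hj : j ∈ Set.Ico 0 4) (i : ℕ) := pow_mem (x_mem_closure_letters hj) i
    have h₀ : x 0 ∈ Submonoid.closure (Set.range letters) := x_mem_closure_letters (by simp)
    have h₁ := hx (j := 1) (by simp)
    have h₂ := hx (j := 2) (by simp)
    have h₃ : x 3 ∈ Submonoid.closure (Set.range letters) := x_mem_closure_letters (by simp)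
    rw [hset]
    exact ((IsRational.singleton h₀).mul (IsRational.singleton (mul_mem (h₁ p) (h₂ q))).closure).mul
      (.singleton (mul_mem (mul_mem (h₁ r) (h₂ s)) h₃))
  · rintro ⟨m, rfl, rfl⟩
    exact ⟨_, ⟨m, rfl⟩, rfl, rfl⟩
  · rintro ⟨_, ⟨m, rfl⟩, ha, hb⟩
    exact ⟨m, ha, hb.symm⟩

theorem realizable_of_isAffineProgram {R : ℕ → ℕ → Prop} (hR : IsAffineProgram R) :
    Realizable R := by
  induction hR with
  | affine p r q s => exact realizable_affine p r q s
  | bot => exact .bot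
  | sup _ _ hR hR' => exact hR.sup hR'
  | comp _ _ hR hR' => exact hR.comp hR'
  | reflTransGen _ hR => exact hR.reflTransGen

theorem exists_fg_submonoid_of_isAffineProgram {R : ℕ → ℕ → Prop} (hR : IsAffineProgram R) :
    ∃ S : Submonoid PathGroup, S.FG ∧ ∃ p q : PathGroup, ∀ n, p * x 1 ^ n * q ∈ S ↔ R n 0 := by
  obtain ⟨B, hB, hRB⟩ := realizable_of_isAffineProgram hR
  have hx₄ : toProd (x 4) = 1 := by simp [factorGen, Int.even_iff]
  obtain ⟨S, hS, p, q, hmem, hof⟩ := exists_fg_submonoid_of_isRational hx₄ letters_mem_closure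
    (hB.mul isRational_closure_cancellers)
  refine ⟨S, hS, p, q, fun n => (Iff.trans ⟨fun h => ?_, ?_⟩ (hRB n 0).symm)⟩
  · have hx₁ : x 1 ^ n ∈ Subgroup.closure (x '' Set.Iio 4) :=
      pow_mem (Subgroup.subset_closure (Set.mem_image_of_mem x (by simp))) n
    obtain ⟨_, ⟨_, ⟨l, hl, rfl⟩, e, he, rfl⟩, hle⟩ := hof _ hx₁ h
    exact ⟨l, hl, chain_of_toProd_eq he hle⟩
  · rintro ⟨l, hl, hln⟩
    obtain ⟨e, he, hle⟩ := exists_wordProd_block_mul_eq hln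
    exact hmem _ ⟨_, ⟨l, hl, rfl⟩, e, he, hle⟩

end PathGroup

open Finsupp (single)

namespace CounterMachine

section Counters

/-- The number `∏ pᵢ ^ vᵢ`, with `pᵢ` the `i`-th prime, which represents the state `v` of
infinitely many counters as a value of the variable of an affine program. -/
noncomputable def code (v : ℕ →₀ ℕ) : ℕ := v.prod fun i e => Nat.nth Nat.Prime i ^ e

theorem code_add (v w : ℕ →₀ ℕ) : code (v + w) = code v * code w :=
  Finsupp.prod_add_index' (fun _ => pow_zero _) fun _ _ _ => pow_add _ _ _

theorem code_single (i e : ℕ) : code (single i e) = Nat.nth Nat.Prime i ^ e :=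
  Finsupp.prod_single_index (pow_zero _)

theorem code_of_ne_zero {v : ℕ →₀ ℕ} {i : ℕ} (hi : v i ≠ 0) :
    code v = Nat.nth Nat.Prime i * code (v - single i 1) := by
  have hle : single i 1 ≤ v := Finsupp.single_le_iff.2 (Nat.one_le_iff_ne_zero.2 hi)
  rw [← pow_one (Nat.nth _ i), ← code_single, ← code_add, add_tsub_cancel_of_le hle]

theorem nth_prime_dvd_code_iff {v : ℕ →₀ ℕ} {i : ℕ} :
    Nat.nth Nat.Prime i ∣ code v ↔ v i ≠ 0 := by
  refine ⟨fun h => ?_, fun h => ⟨_, code_of_ne_zero h⟩⟩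
  obtain ⟨j, hj, hij⟩ := ((Nat.prime_nth_prime i).prime.dvd_finsuppProd_iff).1 h
  have heq := (Nat.prime_dvd_prime_iff_eq (Nat.prime_nth_prime i) (Nat.prime_nth_prime j)).1
    ((Nat.prime_nth_prime i).dvd_of_dvd_pow hij)
  rw [Nat.nth_injective Nat.infinite_setOfPred_prime heq]
  exact Finsupp.mem_support_iff.1 hj

/-- `Outputs R v u` says that the program `R`, started in the state `v` of the counters, can only
end in the state `u`, and does so in some run. -/
def Outputs (R : ℕ → ℕ → Prop) (v u : ℕ →₀ ℕ) : Prop := ∀ b, R (code v) b ↔ b = code u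

theorem Outputs.comp {R R' : ℕ → ℕ → Prop} {v u w : ℕ →₀ ℕ} (h : Outputs R v u)
    (h' : Outputs R' u w) : Outputs (Relation.Comp R R') v w := fun b => by
  simp only [Relation.Comp, h _, exists_eq_left, h' b]

theorem affine_zero_zero {p : ℕ} (hp : 0 < p) {q m b : ℕ} :
    affine p 0 q 0 (p * m) b ↔ b = q * m := by
  constructor
  · rintro ⟨k, hk, rfl⟩
    rw [Nat.eq_of_mul_eq_mul_left hp hk, add_zero]
  · rintro rfl
    exact ⟨m, rfl, rfl⟩

theorem outputs_add (v w : ℕ →₀ ℕ) : Outputs (affine 1 0 (code w) 0) v (v + w) := fun b => by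
  rw [← one_mul (code v), affine_zero_zero one_pos, code_add, mul_comm]

/-- The program that decreases counter `i` by one, and fails if this counter is `0`. -/
noncomputable def decrement (i : ℕ) : ℕ → ℕ → Prop := affine (Nat.nth Nat.Prime i) 0 1 0

theorem outputs_decrement {v : ℕ →₀ ℕ} {i : ℕ} (hi : v i ≠ 0) :
    Outputs (decrement i) v (v - single i 1) := fun b => by
  rw [decrement, code_of_ne_zero hi, affine_zero_zero (Nat.prime_nth_prime i).pos, one_mul]

theorem not_decrement {v : ℕ →₀ ℕ} {i : ℕ} (hi : v i = 0) (b : ℕ) : ¬ decrement i (code v) b := by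
  rintro ⟨m, hm, -⟩
  exact nth_prime_dvd_code_iff.1 ⟨m, hm⟩ hi

/-- The program that does nothing if counter `i` is `0`, and fails otherwise. -/
noncomputable def zeroTest (i : ℕ) : ℕ → ℕ → Prop :=
  (Finset.Ioo 0 (Nat.nth Nat.Prime i)).sup fun r =>
    affine (Nat.nth Nat.Prime i) r (Nat.nth Nat.Prime i) r

theorem isAffineProgram_zeroTest (i : ℕ) : IsAffineProgram (zeroTest i) :=
  Finset.sup_induction .bot (fun _ h _ h' => h.sup h') fun _ _ => .affine ..

theorem zeroTest_code_iff {i : ℕ} {v : ℕ →₀ ℕ} {b : ℕ} :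
    zeroTest i (code v) b ↔ v i = 0 ∧ b = code v := by
  rw [← not_not (a := v i = 0), ← ne_eq, ← nth_prime_dvd_code_iff, zeroTest]
  simp only [Finset.sup_eq_iSup, iSup_apply, iSup_Prop_eq, Finset.mem_Ioo, exists_prop, affine]
  constructor
  · rintro ⟨r, ⟨hr, hrp⟩, m, hm, rfl⟩
    rw [hm, Nat.dvd_add_right (dvd_mul_right _ m)]
    exact ⟨Nat.not_dvd_of_pos_of_lt hr hrp, rfl⟩
  · rintro ⟨hdvd, rfl⟩
    have hpos := Nat.pos_of_ne_zero (mt Nat.dvd_of_mod_eq_zero hdvd)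
    exact ⟨_, ⟨hpos, Nat.mod_lt _ (Nat.prime_nth_prime i).pos⟩, _,
      (Nat.div_add_mod _ _).symm, (Nat.div_add_mod _ _).symm⟩

/-- The program that runs `R` after each decrement of counter `i`, until this counter is `0`. -/
def loop (i : ℕ) (R : ℕ → ℕ → Prop) : ℕ → ℕ → Prop :=
  Relation.Comp (Relation.ReflTransGen (Relation.Comp (decrement i) R)) (zeroTest i)

theorem isAffineProgram_loop {R : ℕ → ℕ → Prop} (hR : IsAffineProgram R) (i : ℕ) :
    IsAffineProgram (loop i R) :=
  ((IsAffineProgram.affine ..).comp hR).reflTransGen.comp (isAffineProgram_zeroTest i)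

theorem Outputs.loop {R : ℕ → ℕ → Prop} {i n : ℕ} {s : ℕ → ℕ →₀ ℕ} (hs : ∀ k ≤ n, s k i = k)
    (hR : ∀ k < n, Outputs R (s (k + 1) - single i 1) (s k)) :
    Outputs (loop i R) (s n) (s 0) := by
  have hbody (k : ℕ) (hk : k < n) :
      Outputs (Relation.Comp (decrement i) R) (s (k + 1)) (s k) :=
    (outputs_decrement (by rw [hs (k + 1) hk]; exact k.succ_ne_zero)).comp (hR k hk)
  intro b
  constructor
  · rintro ⟨c, hc, hcb⟩
    induction n with
    | zero =>
      obtain rfl | ⟨_, ⟨d, hd, -⟩, -⟩ := hc.cases_head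
      · exact (zeroTest_code_iff.1 hcb).2
      · exact absurd hd (not_decrement (hs 0 le_rfl) d)
    | succ n ih =>
      obtain rfl | ⟨d, hd, hdc⟩ := hc.cases_head
      · rw [zeroTest_code_iff, hs (n + 1) le_rfl] at hcb
        exact absurd hcb.1 n.succ_ne_zero
      · obtain rfl := (hbody n n.lt_succ_self d).1 hd
        exact ih (fun k hk => hs k (hk.trans n.le_succ))
          (fun k hk => hR k (hk.trans n.lt_succ_self))
          (fun k hk => hbody k (hk.trans n.lt_succ_self)) hdc
  · rintro rfl
    refine ⟨_, ?_, zeroTest_code_iff.2 ⟨hs 0 n.zero_le, rfl⟩⟩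
    clear hs hR
    induction n with
    | zero => exact .refl
    | succ n ih =>
      exact .head ((hbody n n.lt_succ_self _).2 rfl)
        (ih fun k hk => hbody k (hk.trans n.lt_succ_self))

/-- The program that adds `w` to the counters as many times as it can decrement counter `i`. -/
noncomputable def transfer (i : ℕ) (w : ℕ →₀ ℕ) : ℕ → ℕ → Prop := loop i (affine 1 0 (code w) 0)

theorem isAffineProgram_transfer (i : ℕ) (w : ℕ →₀ ℕ) : IsAffineProgram (transfer i w) :=
  isAffineProgram_loop (.affine ..) i

theorem outputs_transfer {i : ℕ} {w : ℕ →₀ ℕ} (hw : w i = 0) (v : ℕ →₀ ℕ) :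
    Outputs (transfer i w) v (v.update i 0 + v i • w) := by
  have h := Outputs.loop (R := affine 1 0 (code w) 0) (i := i) (n := v i)
    (s := fun k => v.update i k + (v i - k) • w) (by simp [hw]) fun k hk => ?_
  · simpa only [transfer, Finsupp.update_self, tsub_self, zero_smul, add_zero, tsub_zero] using h
  · convert outputs_add _ w using 1
    ext j
    by_cases hj : j = i
    · simp [hj, hw]
    · simp [hj, show v i - k = v i - (k + 1) + 1 by omega, add_mul, add_assoc]

theorem outputs_clear (i : ℕ) (v : ℕ →₀ ℕ) : Outputs (transfer i 0) v (v.update i 0) := by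
  simpa only [smul_zero, add_zero] using outputs_transfer (i := i) (w := 0) rfl v

end Counters

section Assignments

/-- The assignment of the number `g v`, where `v` is the state of the counters, to counter `o` is
computed by an affine program that can use all counters from `N` on if they are `0` at its start,
and which leaves them at `0`. -/
def Assignable (N o : ℕ) (g : (ℕ →₀ ℕ) → ℕ) : Prop :=
  ∃ R, IsAffineProgram R ∧ ∀ v : ℕ →₀ ℕ, (∀ i ≥ N, v i = 0) → Outputs R v (v.update o (g v))

theorem exists_clear (N m : ℕ) : ∃ R, IsAffineProgram R ∧
    ∀ v : ℕ →₀ ℕ, (∀ i ≥ N + m, v i = 0) → Outputs R v (v.filter (· < N)) := by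
  induction m with
  | zero =>
    refine ⟨affine 1 0 (code 0) 0, .affine .., fun v hv => ?_⟩
    convert outputs_add v 0 using 1
    rw [add_zero, Finsupp.filter_eq_self_iff]
    exact fun i hi => not_le.1 fun hNi => hi (hv i hNi)
  | succ m ih =>
    obtain ⟨R, hR, hv⟩ := ih
    refine ⟨_, (isAffineProgram_transfer (N + m) 0).comp hR, fun v hvm => ?_⟩
    have h := (outputs_clear (N + m) v).comp (hv _ fun i hi => ?_)
    · convert h using 1
      ext j
      simp only [Finsupp.filter_apply, Finsupp.coe_update, Function.update_apply]
      grind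
    · rw [Finsupp.coe_update, Function.update_apply]
      grind

theorem Assignable.of_outputs {N o m : ℕ} {g : (ℕ →₀ ℕ) → ℕ} {R : ℕ → ℕ → Prop}
    (hR : IsAffineProgram R) (ho : o < N)
    (h : ∀ v : ℕ →₀ ℕ, (∀ i ≥ N, v i = 0) → ∃ u, Outputs R v u ∧ u o = g v ∧
      (∀ i < N, i ≠ o → u i = v i) ∧ ∀ i ≥ N + m, u i = 0) :
    Assignable N o g := by
  obtain ⟨R', hR', hclear⟩ := exists_clear N m
  refine ⟨_, hR.comp hR', fun v hv => ?_⟩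
  obtain ⟨u, hu, huo, huN, hum⟩ := h v hv
  convert hu.comp (hclear u hum) using 1
  ext j
  simp only [Finsupp.filter_apply, Finsupp.coe_update, Function.update_apply]
  grind

theorem assignable_zero (N o : ℕ) : Assignable N o 0 :=
  ⟨_, isAffineProgram_transfer o 0, fun v _ => outputs_clear o v⟩

/-- Counter `i` is first moved to two temporary counters, from one of which it is restored. -/
theorem assignable_apply {N o i : ℕ} (ho : o < N) (hi : i < N) : Assignable N o (· i) := by
  refine .of_outputs (m := 2) (((isAffineProgram_transfer i (single N 1 + single (N + 1) 1)).comp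
    (isAffineProgram_transfer N (single i 1))).comp ((isAffineProgram_transfer o 0).comp
    (isAffineProgram_transfer (N + 1) (single o 1)))) ho fun v hv => ⟨_,
    ((outputs_transfer ?_ v).comp (outputs_transfer ?_ _)).comp
      ((outputs_clear o _).comp (outputs_transfer ?_ _)), ?_⟩
  · grind [Finsupp.add_apply]
  · grind
  · grind
  · simp only [Finsupp.add_apply, Finsupp.smul_apply, Finsupp.coe_update, Function.update_apply,
      Finsupp.single_apply]
    grind

theorem Assignable.succ {N o : ℕ} {g : (ℕ →₀ ℕ) → ℕ} (h : Assignable N o g) :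
    Assignable N o fun v => g v + 1 := by
  obtain ⟨R, hR, hRg⟩ := h
  refine ⟨_, hR.comp (.affine 1 0 (code (single o 1)) 0), fun v hv => ?_⟩
  convert (hRg v hv).comp (outputs_add _ _) using 1
  ext j
  simp only [Finsupp.add_apply, Finsupp.coe_update, Function.update_apply, Finsupp.single_apply]
  grind

section PrimitiveRecursion

variable {N o i : ℕ} {z : (ℕ →₀ ℕ) → ℕ} {f : ℕ → ℕ → (ℕ →₀ ℕ) → ℕ}

/-- The state reached from `v` when, in the computation of a function by primitive recursion, the
counters `N`, `N + 1` and `N + 2` hold the number `k` of steps left, the number `m` of steps done,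
and the last value `y`. -/
noncomputable def recState (N : ℕ) (v : ℕ →₀ ℕ) (k m y : ℕ) : ℕ →₀ ℕ :=
  ((v.update N k).update (N + 1) m).update (N + 2) y

theorem recState_apply (N : ℕ) (v : ℕ →₀ ℕ) (k m y j : ℕ) : recState N v k m y j =
    if j = N + 2 then y else if j = N + 1 then m else if j = N then k else v j := by
  simp only [recState, Finsupp.coe_update, Function.update_apply]

theorem exists_outputs_recState_init (hi : i < N) (hz : ∀ v w, (∀ j < N, v j = w j) → z v = z w)
    (h : Assignable (N + 3) (N + 2) z) : ∃ R, IsAffineProgram R ∧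
      ∀ v : ℕ →₀ ℕ, (∀ j ≥ N, v j = 0) → Outputs R v (recState N v (v i) 0 (z v)) := by
  obtain ⟨R, hR, hcopy⟩ := assignable_apply (N := N + 3) (o := N) (i := i) (by omega) (by omega)
  obtain ⟨R', hR', hRz⟩ := h
  refine ⟨_, hR.comp hR', fun v hv => ?_⟩
  convert (hcopy v fun j hj => hv j (by omega)).comp (hRz _ fun j hj => ?_) using 1
  · rw [hz (v.update N (v i)) v fun j hj => by rw [Finsupp.coe_update, Function.update_of_ne hj.ne]]
    ext j
    simp only [recState_apply, Finsupp.coe_update, Function.update_apply]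
    grind
  · simp only [Finsupp.coe_update, Function.update_apply]
    grind

theorem exists_outputs_recState_succ (hf : ∀ k y v w, (∀ j < N, v j = w j) → f k y v = f k y w)
    (h : Assignable (N + 3) (N + 2) fun v => f (v (N + 1)) (v (N + 2)) v) :
    ∃ R, IsAffineProgram R ∧ ∀ v : ℕ →₀ ℕ, (∀ j ≥ N, v j = 0) → ∀ k m y,
      Outputs R (recState N v (k + 1) m y - single N 1) (recState N v k (m + 1) (f m y v)) := by
  obtain ⟨R, hR, hRf⟩ := h
  refine ⟨_, hR.comp (.affine 1 0 (code (single (N + 1) 1)) 0), fun v hv k m y => ?_⟩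
  have hdec : recState N v (k + 1) m y - single N 1 = recState N v k m y := by
    ext j
    simp only [Finsupp.tsub_apply, recState_apply, Finsupp.single_apply]
    grind
  have hval : f (recState N v k m y (N + 1)) (recState N v k m y (N + 2)) (recState N v k m y) =
      f m y v := by
    rw [hf _ _ (recState N v k m y) v fun j hj => by rw [recState_apply]; grind]
    congr 1 <;> rw [recState_apply] <;> grind
  rw [hdec]
  convert (hRf (recState N v k m y) fun j hj => ?_).comp (outputs_add _ _) using 1
  · beta_reduce
    rw [hval]
    ext j
    simp only [Finsupp.add_apply, Finsupp.single_apply, Finsupp.coe_update,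
      Function.update_apply, recState_apply]
    grind
  · rw [recState_apply]
    grind

theorem Assignable.rec (ho : o < N) (hi : i < N)
    (hz : ∀ v w, (∀ j < N, v j = w j) → z v = z w)
    (hf : ∀ k y v w, (∀ j < N, v j = w j) → f k y v = f k y w)
    (hzA : Assignable (N + 3) (N + 2) z)
    (hfA : Assignable (N + 3) (N + 2) fun v => f (v (N + 1)) (v (N + 2)) v) :
    Assignable N o fun v => (v i).rec (z v) fun k y => f k y v := by
  obtain ⟨R, hR, hinit⟩ := exists_outputs_recState_init hi hz hzA
  obtain ⟨R', hR', hsucc⟩ := exists_outputs_recState_succ hf hfA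
  obtain ⟨R'', hR'', hout⟩ := assignable_apply (N := N + 3) (o := o) (i := N + 2) (by omega)
    (by omega)
  refine .of_outputs (m := 3) ((hR.comp (isAffineProgram_loop hR' N)).comp hR'') ho fun v hv => ?_
  let r (k : ℕ) : ℕ := k.rec (z v) fun k y => f k y v
  have hloop := Outputs.loop (R := R') (i := N) (n := v i)
    (s := fun k => recState N v k (v i - k) (r (v i - k)))
    (fun k _ => by rw [recState_apply]; grind) fun k hk => by
      rw [show v i - k = v i - (k + 1) + 1 by omega]
      exact hsucc v hv k _ _
  rw [tsub_self, tsub_zero] at hloop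
  refine ⟨_, ((hinit v hv).comp hloop).comp (hout _ fun j hj => ?_), ?_⟩
  · rw [recState_apply]
    grind
  · simp only [Finsupp.coe_update, Function.update_apply, recState_apply]
    grind

end PrimitiveRecursion

section Primrec

variable {m n : ℕ}

/-- The tuple of the contents in the state `v` of the counters in the tuple `is`. -/
def contents (is : Fin n → ℕ) (v : ℕ →₀ ℕ) : List.Vector ℕ n := List.Vector.ofFn fun j => v (is j)

theorem contents_congr {is : Fin n → ℕ} {v w : ℕ →₀ ℕ} (h : ∀ j, v (is j) = w (is j)) :
    contents is v = contents is w := congrArg List.Vector.ofFn (funext h)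

/-- The functions that counters can compute, whichever counters hold the arguments and the
value. -/
def IsCounterComputable (f : List.Vector ℕ n → ℕ) : Prop :=
  ∀ ⦃N o⦄ ⦃is : Fin n → ℕ⦄, o < N → (∀ j, is j < N) → Assignable N o (f ∘ contents is)

theorem exists_assign_tuple {N : ℕ} {g : Fin m → (ℕ →₀ ℕ) → ℕ}
    (hg : ∀ i v w, (∀ j < N, v j = w j) → g i v = g i w)
    (h : ∀ i : Fin m, Assignable (N + m) (N + i) (g i)) {l : ℕ} (hl : l ≤ m) :
    ∃ R, IsAffineProgram R ∧ ∀ v : ℕ →₀ ℕ, (∀ i ≥ N, v i = 0) → ∃ u, Outputs R v u ∧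
      (∀ j < N, u j = v j) ∧ (∀ i : Fin m, i < l → u (N + i) = g i v) ∧ ∀ j ≥ N + l, u j = 0 := by
  induction l with
  | zero =>
    refine ⟨_, .affine 1 0 (code 0) 0, fun v hv => ⟨_, outputs_add v 0, ?_⟩⟩
    simpa using hv
  | succ l ih =>
    obtain ⟨R, hR, hRl⟩ := ih (by omega)
    obtain ⟨R', hR', hRg⟩ := h ⟨l, hl⟩
    refine ⟨_, hR.comp hR', fun v hv => ?_⟩
    obtain ⟨u, hu, huN, hul, hu₀⟩ := hRl v hv
    refine ⟨_, hu.comp (hRg u fun i hi => hu₀ i (by omega)), ?_⟩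
    have hgl := hg ⟨l, hl⟩ u v huN
    simp only [Finsupp.coe_update, Function.update_apply]
    grind

namespace IsCounterComputable

theorem comp {f : List.Vector ℕ m → ℕ} {g : Fin m → List.Vector ℕ n → ℕ}
    (hf : IsCounterComputable f) (hg : ∀ i, IsCounterComputable (g i)) :
    IsCounterComputable fun a => f (List.Vector.ofFn fun i => g i a) := by
  intro N o is ho his
  obtain ⟨R, hR, hRg⟩ := exists_assign_tuple (m := m) (g := fun i => g i ∘ contents is) (N := N)
    (fun i v w h => congrArg (g i) (contents_congr fun j => h _ (his j)))
    (fun i => hg i (by omega) fun j => (his j).trans_le (by omega)) le_rfl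
  obtain ⟨R', hR', hRf⟩ := hf (N := N + m) (o := o) (is := fun i => N + i) (by omega) (by omega)
  refine .of_outputs (m := m) (hR.comp hR') ho fun v hv => ?_
  obtain ⟨u, hu, huN, hum, hu₀⟩ := hRg v hv
  refine ⟨_, hu.comp (hRf u hu₀), ?_⟩
  have hval : contents (fun i : Fin m => N + i) u =
      List.Vector.ofFn fun i => g i (contents is v) :=
    congrArg List.Vector.ofFn (funext fun i => hum i i.2)
  simp only [Finsupp.coe_update, Function.update_apply, Function.comp_apply, hval]
  grind

theorem prec {f : List.Vector ℕ n → ℕ} {g : List.Vector ℕ (n + 2) → ℕ}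
    (hf : IsCounterComputable f) (hg : IsCounterComputable g) :
    IsCounterComputable fun v : List.Vector ℕ (n + 1) =>
      v.head.rec (f v.tail) fun y IH => g (y ::ᵥ IH ::ᵥ v.tail) := by
  intro N o is ho his
  have hlt (j) : is j < N + 3 := (his j).trans_le (by omega)
  have htail (v w : ℕ →₀ ℕ) (h : ∀ j < N, v j = w j) :
      contents (fun j => is j.succ) v = contents (fun j => is j.succ) w :=
    contents_congr fun j => h _ (his j.succ)
  refine .rec (z := f ∘ contents fun j => is j.succ)
    (f := fun y IH v => g (y ::ᵥ IH ::ᵥ contents (fun j => is j.succ) v)) ho (his 0)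
    (fun v w h => congrArg f (htail v w h)) (fun y IH v w h => by rw [htail v w h])
    (hf (by omega) fun j => hlt j.succ) ?_
  exact hg (is := Fin.cons (N + 1) (Fin.cons (N + 2) fun j => is j.succ)) (by omega)
    (Fin.cases (by simp) (Fin.cases (by simp) fun j => hlt j.succ))

theorem of_primrec' {f : List.Vector ℕ n → ℕ} (hf : Nat.Primrec' f) : IsCounterComputable f := by
  induction hf with
  | zero => exact fun N o _ _ _ => assignable_zero N o
  | succ => exact fun N o is ho his => (assignable_apply ho (his 0)).succ
  | get j =>
    intro N o is ho his
    simpa only [Function.comp_def, contents, List.Vector.get_ofFn] using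
      assignable_apply ho (his j)
  | comp g _ _ hf hg => exact hf.comp hg
  | prec _ _ hf hg => exact hf.prec hg

end IsCounterComputable

end Primrec

end Assignments

section Search

theorem reflTransGen_affine_code_iff {v w : ℕ →₀ ℕ} {b : ℕ} :
    Relation.ReflTransGen (affine 1 0 (code w) 0) (code v) b ↔ ∃ k : ℕ, b = code (v + k • w) := by
  constructor
  · intro h
    induction h with
    | refl => exact ⟨0, by rw [zero_smul, add_zero]⟩
    | tail _ h ih =>
      obtain ⟨k, rfl⟩ := ih
      exact ⟨k + 1, by rw [(outputs_add _ w _).1 h, succ_nsmul, add_assoc]⟩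
  · rintro ⟨k, rfl⟩
    induction k with
    | zero => rw [zero_smul, add_zero]
    | succ k ih => exact ih.tail ((outputs_add _ w _).2 (by rw [succ_nsmul, add_assoc]))

theorem exists_isAffineProgram_of_primrec₂ {g : ℕ → ℕ → ℕ} (hg : Primrec₂ g) :
    ∃ R, IsAffineProgram R ∧ ∀ m, R (2 ^ m) 0 ↔ ∃ k, g m k ≠ 0 := by
  obtain ⟨R, hR, hRg⟩ : Assignable 3 2 fun v => g (v 0) (v 1) :=
    IsCounterComputable.of_primrec' (Nat.Primrec'.prim_iff₂.2 hg) (is := ![0, 1]) (by simp)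
      (by decide)
  have haccept (v : ℕ →₀ ℕ) : affine (Nat.nth Nat.Prime 2) 0 0 0 (code v) 0 ↔ v 2 ≠ 0 := by
    simp [← nth_prime_dvd_code_iff, affine, Dvd.dvd]
  refine ⟨_, (IsAffineProgram.affine 1 0 (code (single 1 1)) 0).reflTransGen.comp
    (hR.comp (.affine (Nat.nth Nat.Prime 2) 0 0 0)), fun m => ?_⟩
  have hrun (k : ℕ) : Outputs R (single 0 m + k • single 1 1)
      ((single 0 m + k • single 1 1).update 2 (g m k)) := by
    convert hRg (single 0 m + k • single 1 1) fun i hi => ?_ using 2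
    · simp
    · simp [show i ≠ 0 by omega, show i ≠ 1 by omega]
  have hinput : 2 ^ m = code (single 0 m) := by rw [code_single, Nat.nth_prime_zero_eq_two]
  rw [hinput]
  constructor
  · rintro ⟨b, hb, c, hbc, hc⟩
    obtain ⟨k, rfl⟩ := reflTransGen_affine_code_iff.1 hb
    rw [(hrun k c).1 hbc, haccept, Finsupp.coe_update, Function.update_self] at hc
    exact ⟨k, hc⟩
  · rintro ⟨k, hk⟩
    refine ⟨_, reflTransGen_affine_code_iff.2 ⟨k, rfl⟩, _, (hrun k _).2 rfl, ?_⟩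
    rwa [haccept, Finsupp.coe_update, Function.update_self]

end Search

end CounterMachine

section MembershipProblem

theorem exists_primrec₂_of_rePred {α : Type*} [Primcodable α] {p : α → Prop} (hp : REPred p) :
    ∃ g : ℕ → ℕ → ℕ, Primrec₂ g ∧ ∀ a, p a ↔ ∃ k, g (Encodable.encode a) k ≠ 0 := by
  obtain ⟨c, hc⟩ := Nat.Partrec.Code.exists_code.1 hp
  have hdom (a : α) : p a ↔ (c.eval (Encodable.encode a)).Dom := by
    simp [hc, Part.assert]
  refine ⟨fun m k => bif (Nat.Partrec.Code.evaln k c m).isSome then 1 else 0,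
    .cond (Primrec.option_isSome.comp (Nat.Partrec.Code.primrec_evaln.comp
      (.pair (.pair .snd (.const c)) .fst))) (.const 1) (.const 0), fun a => ?_⟩
  rw [hdom, Part.dom_iff_mem]
  simp only [Nat.Partrec.Code.evaln_complete]
  rw [exists_comm]
  simp only [Option.mem_def, ← Option.isSome_iff_exists]
  refine exists_congr fun k => ?_
  cases (Nat.Partrec.Code.evaln k c (Encodable.encode a)).isSome <;> simp

theorem π_append (l l' : List (Fin 2 × Bool)) : π (l ++ l') = π l * π l' := by
  simp only [π, ← FreeGroup.mul_mk, map_mul]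

theorem π_surjective : Function.Surjective π := fun g => by
  obtain ⟨w, rfl⟩ := PresentedGroup.mk_surjective _ g
  exact ⟨w.toWord, by rw [π, FreeGroup.mk_toWord]⟩

theorem π_replicate (n : ℕ) : π (List.replicate n (0, true)) = G.a ^ n := by
  induction n with
  | zero => rfl
  | succ n ih => rw [List.replicate_succ', π_append, ih, pow_succ]; rfl

theorem primrec_two_pow : Primrec fun m : ℕ => 2 ^ m :=
  (Primrec.nat_rec' .id (.const 1)
    (Primrec.nat_mul.comp (Primrec.snd.comp .snd) (.const 2)).to₂).of_eq fun m => by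
    induction m with
    | zero => rfl
    | succ m ih => rw [pow_succ, ← ih]; rfl

theorem primrec_replicate {α : Type*} [Primcodable α] (a : α) :
    Primrec fun n : ℕ => List.replicate n a :=
  (Primrec.list_map .list_range (Primrec.const a).to₂).of_eq fun n => by
    rw [List.map_const', List.length_range]

theorem exists_fg_submonoid_manyOneReducible {α : Type*} [Primcodable α] {p : α → Prop}
    (hp : REPred p) : ∃ S : Submonoid G, S.FG ∧ p ≤₀ fun l : List (Fin 2 × Bool) => π l ∈ S := by
  obtain ⟨g, hg, hpg⟩ := exists_primrec₂_of_rePred hp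
  obtain ⟨R, hR, hRg⟩ := CounterMachine.exists_isAffineProgram_of_primrec₂ hg
  obtain ⟨S, hS, u, v, hSR⟩ := PathGroup.exists_fg_submonoid_of_isAffineProgram hR
  obtain ⟨pre, hpre⟩ := π_surjective (G.ofPathGroup u * G.t)
  obtain ⟨post, hpost⟩ := π_surjective (G.t⁻¹ * G.ofPathGroup v)
  have hword (n : ℕ) : π (pre ++ List.replicate n (0, true) ++ post) =
      G.ofPathGroup (u * PathGroup.x 1 ^ n * v) := by
    rw [π_append, π_append, hpre, hpost, π_replicate, map_mul, map_mul, map_pow, G.ofPathGroup_x,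
      conj_pow, zpow_one]
    group
  refine ⟨S.map G.ofPathGroup, hS.map _, fun a => pre ++
    List.replicate (2 ^ Encodable.encode a) (0, true) ++ post, Primrec.to_comp ?_, fun a => ?_⟩
  · exact Primrec.list_append.comp (Primrec.list_append.comp (.const pre)
      ((primrec_replicate _).comp (primrec_two_pow.comp .encode))) (.const post)
  · beta_reduce
    rw [hword, Submonoid.mem_map_iff_mem G.ofPathGroup_injective, hSR, hRg, hpg]

end MembershipProblem

/-- There is a fixed finitely generated submonoid of the one-relator group `G`
whose membership problem within `G` is undecidable. -/
theorem exists_fg_submonoid_undecidable_membership :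
    ∃ S : Submonoid G, S.FG ∧ ¬ ComputablePred (fun l : List (Fin 2 × Bool) => π l ∈ S) := by
  obtain ⟨S, hS, hred⟩ :=
    exists_fg_submonoid_manyOneReducible (ComputablePred.halting_problem_re 0)
  exact ⟨S, hS, fun h =>
    ComputablePred.halting_problem 0 (ComputablePred.computable_of_manyOneReducible hred h)⟩
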